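/- arXiv:1511.05540 — 2 statements merged into one kernel-verified Lean document; each statement's English description precedes it below -/
import Mathlib

section
/- Let R be a commutative ring, m ≥ 0, n ≥ 1, and k = 2n(⌊m/2⌋+1). Then for all A₁,…,A_k ∈ M_n E^m, the product of ⌊m/2⌋+1 standard polynomial values s_{2n}(A₁,…,A_{2n}) · s_{2n}(A_{2n+1},…,A_{4n}) ⋯ s_{2n}(A_{k−2n+1},…,A_k) equals 0. -/
section
open Matrix Polynomial

theorem Matrix.derivative_charpoly {ι A : Type*} [Fintype ι] [DecidableEq ι] [CommRing A]
    (M : Matrix ι ι A) :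
    derivative M.charpoly = (adjugate M.charmatrix).trace := by
  simp only [Matrix.charpoly, Matrix.trace, diag_apply, adjugate_apply, det_apply, derivative_sum]
  rw [Finset.sum_comm]
  refine Finset.sum_congr rfl fun σ _ => ?_
  rw [Units.smul_def, derivative_smul, derivative_prod_finset, Finset.smul_sum]
  rw [← Equiv.sum_comp σ fun i => _ • ∏ x, (M.charmatrix.updateRow i (Pi.single i 1)) (σ x) x]
  refine Finset.sum_congr rfl fun i _ => ?_
  rw [← Finset.mul_prod_erase Finset.univ _ (Finset.mem_univ i), mul_comm]
  congr 2
  · by_cases h : σ i = i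
    · simp [h]
    · simp [h, Ne.symm h]
  · refine Finset.prod_congr rfl fun j hj => ?_
    rw [updateRow_ne]
    simpa using (Finset.ne_of_mem_erase hj)

/-- A matrix over a commutative algebra over a field of characteristic zero is nilpotent if all its
positive powers have trace zero. -/
theorem Matrix.pow_card_eq_zero_of_trace_pow_eq_zero {ι A : Type*} (K : Type*) [Fintype ι]
    [DecidableEq ι] [Field K] [CharZero K] [CommRing A] [Algebra K A] (M : Matrix ι ι A)
    (h : ∀ k, (M ^ (k + 1)).trace = 0) : M ^ Fintype.card ι = 0 := by
  nontriviality A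
  set B : ℕ → Matrix ι ι A := fun k => (adjugate M.charmatrix).map fun p => p.coeff k with hB
  have hmul : adjugate M.charmatrix * M.charmatrix = M.charpoly • 1 := adjugate_mul _
  have hchar : M.charmatrix = (X : A[X]) • 1 - M.map C := by
    rw [charmatrix, smul_one_eq_diagonal]; rfl
  have hsucc (k : ℕ) : B k = B (k + 1) * M + M.charpoly.coeff (k + 1) • 1 := by
    ext i j
    have := congr_arg (fun P : Matrix ι ι A[X] => (P i j).coeff (k + 1)) hmul
    rw [hchar, mul_sub] at this
    simp [mul_apply, ← hchar] at this
    simp [hB, mul_apply, one_apply] at this ⊢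
    rw [sub_eq_iff_eq_add'] at this
    rw [this]
    split_ifs <;> simp
  have hzero : B 0 * M + M.charpoly.coeff 0 • 1 = 0 := by
    ext i j
    have := congr_arg (fun P : Matrix ι ι A[X] => (P i j).coeff 0) hmul
    rw [hchar, mul_sub] at this
    simp [mul_apply, ← hchar] at this
    simp [hB, mul_apply, one_apply] at this ⊢
    rw [add_comm, ← sub_neg_eq_add, this]
    split_ifs <;> simp
  have htr (k : ℕ) : (B k).trace = (k + 1) * M.charpoly.coeff (k + 1) := by
    have := congr_arg (fun p : A[X] => p.coeff k) M.derivative_charpoly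
    simp only [coeff_derivative] at this
    rw [mul_comm, this]
    simp [hB, Matrix.trace]
  obtain ⟨N, hN⟩ : ∃ N, ∀ k ≥ N, B k = 0 := by
    refine ⟨(∑ i, ∑ j, (adjugate M.charmatrix i j).natDegree) + 1, fun k hk => ?_⟩
    ext i j
    refine coeff_eq_zero_of_natDegree_lt (lt_of_le_of_lt ?_ hk)
    exact (Finset.single_le_sum (f := fun j => (adjugate M.charmatrix i j).natDegree)
      (fun _ _ => Nat.zero_le _) (Finset.mem_univ j)).trans
      (Finset.single_le_sum (f := fun i => ∑ j, (adjugate M.charmatrix i j).natDegree)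
      (fun _ _ => Nat.zero_le _) (Finset.mem_univ i))
  have hvanish (d : ℕ) : ∀ k, N ≤ k + d → ∀ j, (B k * M ^ (j + 1)).trace = 0 := by
    induction d with
    | zero => intro k hk j; simp [hN k hk]
    | succ d ih =>
      intro k hk j
      rw [hsucc, add_mul, trace_add, mul_assoc, ← pow_succ', ih (k + 1) (by omega)]
      simp [h]
  have hBM (k : ℕ) : (B k * M).trace = 0 := by
    simpa using hvanish N k (by omega) 0
  have hcoeff (k : ℕ) : ((k : K) - Fintype.card ι) • M.charpoly.coeff k = 0 := by
    rw [sub_smul, Nat.cast_smul_eq_nsmul, Nat.cast_smul_eq_nsmul, nsmul_eq_mul, nsmul_eq_mul]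
    cases k with
    | zero =>
      have := congr_arg trace hzero
      simpa [trace_add, hBM, mul_comm] using this
    | succ k =>
      have := congr_arg trace (hsucc k)
      rw [htr, trace_add, hBM, trace_smul, trace_one] at this
      push_cast
      rw [this]
      simp [mul_comm]
  have hpoly : M.charpoly = X ^ Fintype.card ι := by
    ext k
    rw [coeff_X_pow]
    split_ifs with hk
    · rw [hk, ← M.charpoly_natDegree_eq_dim]
      exact M.charpoly_monic.coeff_natDegree
    · refine (smul_eq_zero.mp (hcoeff k)).resolve_left ?_
      rw [sub_eq_zero]
      exact_mod_cast hk
  simpa [hpoly] using M.aeval_self_charpoly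

end
open Matrix

theorem ExteriorAlgebra.ι_mul_ι_mem_center {K V : Type*} [CommRing K] [AddCommGroup V] [Module K V]
    (x y : V) : ι K x * ι K y ∈ Subalgebra.center K (ExteriorAlgebra K V) := by
  have swap (a b : V) : ι K a * ι K b = -(ι K b * ι K a) :=
    eq_neg_of_add_eq_zero_left (ι_add_mul_swap a b)
  rw [Subalgebra.mem_center_iff]
  intro z
  induction z using ExteriorAlgebra.induction with
  | algebraMap r => exact Algebra.commutes r _
  | ι w => rw [mul_assoc, swap y w, mul_neg, ← mul_assoc, ← mul_assoc, swap x w, neg_mul, neg_neg]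
  | mul a b ha hb => rw [mul_assoc, hb, ← mul_assoc, ha, mul_assoc]
  | add a b ha hb => rw [add_mul, mul_add, ha, hb]

/-- A square matrix of vectors, seen as a matrix over the exterior algebra, has an even power equal
to zero. -/
theorem ExteriorAlgebra.matrix_pow_eq_zero {ι K V : Type*} [Fintype ι] [DecidableEq ι] [Field K]
    [CharZero K] [AddCommGroup V] [Module K V] (b : Matrix ι ι V) :
    (b.map (ExteriorAlgebra.ι K)) ^ (2 * Fintype.card ι) = 0 := by
  set B := b.map (ExteriorAlgebra.ι K) with hB
  let Z := Subalgebra.center K (ExteriorAlgebra K V)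
  have hmem (i j : ι) : (B * B) i j ∈ Z := by
    rw [mul_apply]
    exact sum_mem fun l _ => ι_mul_ι_mem_center _ _
  let C : Matrix ι ι Z := fun i j => ⟨(B * B) i j, hmem i j⟩
  have hC : Z.val.mapMatrix C = B * B := rfl
  have htrace (k : ℕ) : (C ^ (k + 1)).trace = 0 := by
    set D := Z.val.mapMatrix (C ^ k) with hD
    have hDB : D = (B * B) ^ k := by rw [hD, map_pow, hC]
    have hcomm : D * B = B * D := by
      rw [hDB]
      exact (((Commute.refl B).mul_right (Commute.refl B)).pow_right k).symm
    have hcen (i j : ι) (z : ExteriorAlgebra K V) : z * D i j = D i j * z :=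
      Subalgebra.mem_center_iff.mp ((C ^ k) i j).2 z
    have hanti : (B * (B * D)).trace = -(B * D * B).trace := by
      simp only [Matrix.trace, diag_apply, mul_apply, Finset.mul_sum, Finset.sum_mul,
        ← Finset.sum_neg_distrib]
      rw [Finset.sum_comm]
      refine Finset.sum_congr rfl fun j _ => Finset.sum_congr rfl fun i _ =>
        Finset.sum_congr rfl fun l _ => ?_
      rw [mul_assoc, ← hcen, ← mul_assoc, ← mul_assoc, ← neg_mul]
      exact congr_arg (· * D l i) (eq_neg_of_add_eq_zero_left (ι_add_mul_swap _ _))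
    have h2 : (2 : K) • (B * (B * D)).trace = 0 := by
      rw [two_smul]
      nth_rewrite 1 [hanti]
      rw [mul_assoc B D B, hcomm, neg_add_cancel]
    have hval : Z.val (C ^ (k + 1)).trace = (B * (B * D)).trace := by
      rw [← mul_assoc, hDB, ← pow_succ', ← hC, ← map_pow]
      simp [Matrix.trace]
    apply Subtype.val_injective
    exact hval.trans ((smul_eq_zero.mp h2).resolve_left two_ne_zero)
  rw [pow_mul, sq, ← hC, ← map_pow, pow_card_eq_zero_of_trace_pow_eq_zero K C htrace, map_zero]

/-- The standard polynomial of degree `k`, evaluated at the family `x`. -/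
def standardPolynomial {k : ℕ} {S : Type*} [Ring S] (x : Fin k → S) : S :=
  ∑ π : Equiv.Perm (Fin k), (Equiv.Perm.sign π : ℤ) • (List.ofFn fun j => x (π j)).prod

theorem map_standardPolynomial {k : ℕ} {S T : Type*} [Ring S] [Ring T] (f : S →+* T)
    (x : Fin k → S) : f (standardPolynomial x) = standardPolynomial fun i => f (x i) := by
  simp [standardPolynomial, map_sum, map_list_prod, List.map_ofFn, Function.comp_def]

theorem Matrix.map_smul_list_prod {ι κ K A : Type*} [Fintype ι] [DecidableEq ι] [CommRing K]
    [Ring A] [Algebra K A] (M : κ → Matrix ι ι K) (e : κ → A) (l : List κ) :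
    (l.map fun t => (M t).map (· • e t)).prod
      = (l.map M).prod.map (· • (l.map e).prod) := by
  induction l with
  | nil =>
    ext i j
    by_cases h : i = j <;> simp [h]
  | cons t l ih =>
    rw [List.map_cons, List.prod_cons, ih]
    ext i j
    simp only [mul_apply, map_apply, List.map_cons, List.prod_cons, Finset.sum_smul,
      smul_mul_smul_comm]

theorem Matrix.sum_map_smul_pow {ι κ K A : Type*} [Fintype ι] [DecidableEq ι] [Fintype κ]
    [DecidableEq κ] [CommRing K] [Ring A] [Algebra K A] (M : κ → Matrix ι ι K) (e : κ → A) (k : ℕ) :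
    (∑ t, (M t).map (· • e t)) ^ k = ∑ f : Fin k → κ,
      (List.ofFn fun i => M (f i)).prod.map (· • (List.ofFn fun i => e (f i)).prod) := by
  have h := (MultilinearMap.mkPiAlgebraFin ℤ k (Matrix ι ι A)).map_sum
    (fun _ t => (M t).map (· • e t))
  simp only [MultilinearMap.mkPiAlgebraFin_apply, List.ofFn_const, List.prod_replicate] at h
  rw [h]
  refine Finset.sum_congr rfl fun f _ => ?_
  have := map_smul_list_prod M e (List.ofFn f)
  simpa only [List.map_ofFn, Function.comp_def] using this

theorem AlternatingMap.sum_apply_comp_smul {k : ℕ} {K V W : Type*} [CommRing K] [AddCommGroup V]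
    [Module K V] [AddCommGroup W] [Module K W] (φ : V [⋀^Fin k]→ₗ[K] K) (v : Fin k → V)
    (g : (Fin k → Fin k) → W) :
    ∑ f : Fin k → Fin k, φ (fun i => v (f i)) • g f
      = φ v • ∑ π : Equiv.Perm (Fin k), (Equiv.Perm.sign π : ℤ) • g π := by
  rw [Finset.smul_sum]
  symm
  refine Finset.sum_of_injOn (fun π : Equiv.Perm (Fin k) => (π : Fin k → Fin k))
    DFunLike.coe_injective.injOn (fun _ _ => Finset.mem_coe.mpr (Finset.mem_univ _)) ?_ ?_
  · intro f _ hf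
    have hinj : ¬ Function.Injective f := fun h =>
      hf ⟨Equiv.ofBijective f (Finite.injective_iff_bijective.mp h), by simp, rfl⟩
    rw [φ.map_eq_zero_of_not_injective (fun i => v (f i))
      fun h => hinj (Function.Injective.of_comp (f := v) h), zero_smul]
  · intro π _
    have := φ.map_perm v π
    simp only [Function.comp_def] at this
    rw [this, Units.smul_def, smul_comm, smul_assoc]

theorem standardPolynomial_matrix_eq_zero_of_charZero {K : Type*} [Field K] [CharZero K] {n : ℕ}
    (A : Fin (2 * n) → Matrix (Fin n) (Fin n) K) : standardPolynomial A = 0 := by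
  let e : Fin (2 * n) → (Fin (2 * n) → K) := Pi.basisFun K _
  let φ : ∀ i, (Fin (2 * n) → K) [⋀^Fin i]→ₗ[K] K :=
    Function.update 0 (2 * n) (Pi.basisFun K (Fin (2 * n))).det
  let Φ := ExteriorAlgebra.liftAlternating (R := K) φ
  have hB : (∑ t, (A t).map (· • ExteriorAlgebra.ι K (e t)))
      = (Matrix.of fun i j => ∑ t, A t i j • e t).map (ExteriorAlgebra.ι K) := by
    ext i j
    simp [Matrix.sum_apply]
  have hpow := ExteriorAlgebra.matrix_pow_eq_zero (K := K)
    (Matrix.of fun i j => ∑ t, A t i j • e t)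
  rw [← hB, Fintype.card_fin, Matrix.sum_map_smul_pow] at hpow
  have hφ : φ (2 * n) = (Pi.basisFun K (Fin (2 * n))).det := Function.update_self ..
  have hsum : ∑ f : Fin (2 * n) → Fin (2 * n),
      φ (2 * n) (fun i => e (f i)) • (List.ofFn fun i => A (f i)).prod = 0 := by
    ext i j
    have := congr_arg (fun P => Φ (P i j)) hpow
    simp only [Matrix.sum_apply, Matrix.map_apply, map_sum, map_smul, Matrix.zero_apply,
      map_zero] at this
    rw [Matrix.zero_apply, ← this, Matrix.sum_apply]
    refine Finset.sum_congr rfl fun f _ => ?_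
    rw [← ExteriorAlgebra.ιMulti_apply, ExteriorAlgebra.liftAlternating_apply_ιMulti,
      Matrix.smul_apply, smul_eq_mul, smul_eq_mul, mul_comm]
  rw [AlternatingMap.sum_apply_comp_smul (φ (2 * n)) e fun f => (List.ofFn fun i => A (f i)).prod,
    hφ, Module.Basis.det_self, one_smul] at hsum
  exact hsum

/-- The **Amitsur–Levitzki theorem**. -/
theorem standardPolynomial_matrix_eq_zero {S : Type*} [CommRing S] {n : ℕ}
    (A : Fin (2 * n) → Matrix (Fin n) (Fin n) S) : standardPolynomial A = 0 := by
  let P := MvPolynomial (Fin (2 * n) × Fin n × Fin n) ℤ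
  let G : Fin (2 * n) → Matrix (Fin n) (Fin n) P := fun t =>
    Matrix.of fun i j => MvPolynomial.X (t, i, j)
  have hG : standardPolynomial G = 0 := by
    have := map_standardPolynomial (algebraMap P (FractionRing P)).mapMatrix G
    rw [standardPolynomial_matrix_eq_zero_of_charZero] at this
    ext1 i j
    refine IsFractionRing.injective P (FractionRing P) ?_
    simpa using congr_fun (congr_fun this i) j
  let ev : P →+* S := MvPolynomial.eval₂Hom (Int.castRingHom S) fun x => A x.1 x.2.1 x.2.2
  have hev : (fun t => ev.mapMatrix (G t)) = A := by
    ext t i j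
    exact MvPolynomial.eval₂_X ..
  rw [← hev, ← map_standardPolynomial, hG, map_zero]

namespace ExteriorAlgebra

variable (R M : Type*) [CommRing R] [AddCommGroup M] [Module R M]

/-- The elements of an exterior algebra all of whose components have degree at least `k`. -/
def degreeGE (k : ℕ) : Submodule R (ExteriorAlgebra R M) := ⨆ j : ℕ, ⋀[R]^(k + j) M

variable {R M}

theorem mul_mem_degreeGE {a b : ℕ} {x y : ExteriorAlgebra R M} (hx : x ∈ degreeGE R M a)
    (hy : y ∈ degreeGE R M b) : x * y ∈ degreeGE R M (a + b) := by
  have h : degreeGE R M a * degreeGE R M b ≤ degreeGE R M (a + b) := by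
    simp only [degreeGE, Submodule.iSup_mul, Submodule.mul_iSup]
    refine iSup_le fun i => iSup_le fun j => ?_
    rw [← pow_add, add_add_add_comm]
    exact le_iSup (fun j : ℕ => ⋀[R]^(a + b + j) M) (j + i)
  exact h (Submodule.mul_mem_mul hx hy)

theorem exteriorPower_eq_bot_of_lt {m j : ℕ} (h : m < j) : ⋀[R]^j (Fin m → R) = ⊥ := by
  rw [← ιMulti_span_fixedDegree, Submodule.span_eq_bot]
  have h0 : ιMulti R (M := Fin m → R) j = 0 := by
    refine Module.Basis.ext_alternating (Pi.basisFun R (Fin m)) fun v hv => ?_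
    have := Fintype.card_le_of_injective v hv
    simp only [Fintype.card_fin] at this
    omega
  rintro _ ⟨v, rfl⟩
  rw [h0, AlternatingMap.zero_apply]

theorem degreeGE_eq_bot_of_lt {m k : ℕ} (h : m < k) : degreeGE R (Fin m → R) k = ⊥ := by
  simp only [degreeGE, iSup_eq_bot]
  exact fun j => exteriorPower_eq_bot_of_lt (by omega)

theorem mem_degreeGE_two_of_toTrivSqZeroExt_eq_zero [Module Rᵐᵒᵖ M] [IsCentralScalar R M]
    {x : ExteriorAlgebra R M} (hx : toTrivSqZeroExt x = 0) : x ∈ degreeGE R M 2 := by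
  have hker : degreeGE R M 2 ≤ LinearMap.ker (toTrivSqZeroExt (R := R) (M := M)).toLinearMap := by
    refine iSup_le fun j => ?_
    have hsq : LinearMap.range (ι R (M := M)) ^ 2
        ≤ LinearMap.ker (toTrivSqZeroExt (R := R) (M := M)).toLinearMap := by
      rw [sq, Submodule.mul_le]
      rintro _ ⟨v, rfl⟩ _ ⟨w, rfl⟩
      simp
    rw [exteriorPower, pow_add, Submodule.mul_le]
    intro x hx y _
    have : toTrivSqZeroExt x = 0 := hsq hx
    simp [this]
  have hdecomp : ∀ x : ExteriorAlgebra R M, ∃ (r : R) (v : M), ∃ y ∈ degreeGE R M 2,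
      x = algebraMap R _ r + ι R v + y := by
    intro x
    have hx : x ∈ ⨆ i : ℕ, LinearMap.range (ι R (M := M)) ^ i := by
      rw [CliffordAlgebra.iSup_ι_range_eq_top]; trivial
    induction hx using Submodule.iSup_induction' with
    | mem i x hx =>
      match i, hx with
      | 0, hx =>
        rw [pow_zero, Submodule.mem_one] at hx
        obtain ⟨r, rfl⟩ := hx
        exact ⟨r, 0, 0, zero_mem _, by simp⟩
      | 1, hx =>
        rw [pow_one] at hx
        obtain ⟨v, rfl⟩ := hx
        exact ⟨0, v, 0, zero_mem _, by simp⟩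
      | i + 2, hx =>
        refine ⟨0, 0, x, ?_, by simp⟩
        rw [add_comm] at hx
        exact Submodule.mem_iSup_of_mem (p := fun j : ℕ => ⋀[R]^(2 + j) M) i hx
    | zero => exact ⟨0, 0, 0, zero_mem _, by simp⟩
    | add x y _ _ hx hy =>
      obtain ⟨r, v, x, hx, rfl⟩ := hx
      obtain ⟨s, w, y, hy, rfl⟩ := hy
      exact ⟨r + s, v + w, x + y, add_mem hx hy, by simp only [map_add]; abel⟩
  obtain ⟨r, v, y, hy, rfl⟩ := hdecomp x
  have h0 : toTrivSqZeroExt y = 0 := hker hy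
  rw [map_add, map_add, h0, add_zero, AlgHom.commutes, toTrivSqZeroExt_ι] at hx
  have hr : r = 0 := by
    simpa [TrivSqZeroExt.algebraMap_eq_inl] using congr_arg TrivSqZeroExt.fst hx
  have hv : v = 0 := by simpa [hr] using congr_arg TrivSqZeroExt.snd hx
  simpa [hr, hv] using hy

theorem matrix_list_prod_mem_degreeGE {ι : Type*} [Fintype ι] [DecidableEq ι] {d : ℕ}
    (l : List (Matrix ι ι (ExteriorAlgebra R M)))
    (h : ∀ P ∈ l, ∀ i j, P i j ∈ degreeGE R M d) (i j : ι) :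
    l.prod i j ∈ degreeGE R M (d * l.length) := by
  induction l generalizing i with
  | nil =>
    have h1 : (1 : ExteriorAlgebra R M) ∈ degreeGE R M 0 :=
      Submodule.mem_iSup_of_mem (p := fun j : ℕ => ⋀[R]^(0 + j) M) 0 (Submodule.one_le.mp le_rfl)
    by_cases hij : i = j <;> simp [hij, h1]
  | cons P l ih =>
    rw [List.prod_cons, Matrix.mul_apply, List.length_cons, Nat.mul_succ, add_comm]
    exact sum_mem fun t _ => mul_mem_degreeGE (h P (by simp) i t)
      (ih (fun Q hQ => h Q (by simp [hQ])) t)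

theorem standardPolynomial_matrix_mem_degreeGE {n : ℕ}
    (A : Fin (2 * n) → Matrix (Fin n) (Fin n) (ExteriorAlgebra R M)) (i j : Fin n) :
    standardPolynomial A i j ∈ degreeGE R M 2 := by
  let : Module Rᵐᵒᵖ M := Module.compHom _ ((RingHom.id R).fromOpposite mul_comm)
  have : IsCentralScalar R M := ⟨fun _ _ => rfl⟩
  apply mem_degreeGE_two_of_toTrivSqZeroExt_eq_zero
  have := map_standardPolynomial (toTrivSqZeroExt (R := R) (M := M)).toRingHom.mapMatrix A
  rw [standardPolynomial_matrix_eq_zero] at this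
  exact congr_fun (congr_fun this i) j

end ExteriorAlgebra


/-- For `k = 2n(⌊m/2⌋ + 1)` and matrices `A₁, …, A_k` over the Grassmann algebra of
rank `m`, the product `s_{2n}(A₁,…,A_{2n}) ⋅ s_{2n}(A_{2n+1},…,A_{4n}) ⋯
s_{2n}(A_{k−2n+1},…,A_k)` of the `⌊m/2⌋ + 1` consecutive standard-polynomial values
vanishes. -/
theorem grassmann_matrix_product_of_standard_polynomials
    (R : Type*) [CommRing R] (m n : ℕ) (hn : 1 ≤ n)
    (A : Fin (2 * n * (m / 2 + 1)) → Matrix (Fin n) (Fin n)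
      (ExteriorAlgebra R (Fin m → R))) :
    (List.ofFn fun r : Fin (m / 2 + 1) =>
      ∑ π : Equiv.Perm (Fin (2 * n)),
        (Equiv.Perm.sign π : ℤ) •
          (List.ofFn fun j : Fin (2 * n) =>
            A ⟨2 * n * r.val + (π j).val, by
              have h1 := r.isLt
              have h2 := (π j).isLt
              calc 2 * n * r.val + (π j).val < 2 * n * (r.val + 1) := by
                    rw [Nat.mul_succ]; omega
                _ ≤ 2 * n * (m / 2 + 1) := Nat.mul_le_mul_left _ h1⟩).prod).prod
      = 0 := by
  ext i j
  have h := ExteriorAlgebra.matrix_list_prod_mem_degreeGE _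
    (List.forall_mem_ofFn_iff.mpr fun r : Fin (m / 2 + 1) =>
      ExteriorAlgebra.standardPolynomial_matrix_mem_degreeGE fun j : Fin (2 * n) =>
        A ⟨2 * n * r.val + j.val, by
          have h1 := r.isLt
          have h2 := j.isLt
          calc 2 * n * r.val + j.val < 2 * n * (r.val + 1) := by rw [Nat.mul_succ]; omega
            _ ≤ 2 * n * (m / 2 + 1) := Nat.mul_le_mul_left _ h1⟩) i j
  rw [List.length_ofFn, ExteriorAlgebra.degreeGE_eq_bot_of_lt (by omega), Submodule.mem_bot] at h
  exact h
end

section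
/- Let R be a field of characteristic zero, or of prime characteristic p > 2⌊m/2⌋, and let n ≥ 1. Then the ring M_n E^m does not satisfy the standard identity of degree k = 2(n + ⌊m/2⌋) − 1; that is, there exist matrices C₁,…,C_k ∈ M_n E^m with Σ_{π ∈ 𝔖_k} sign(π) C_{π(1)} ⋯ C_{π(k)} ≠ 0. -/
/-- The standard polynomial of degree `k`, evaluated at `x`. -/
def standardPoly {A : Type*} [Ring A] {k : ℕ} (x : Fin k → A) : A :=
  ∑ π : Equiv.Perm (Fin k), (Equiv.Perm.sign π : ℤ) • (List.ofFn fun i => x (π i)).prod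

section StandardPoly

variable {A : Type*} [Ring A]

lemma standardPoly_comp_perm {k : ℕ} (x : Fin k → A) (σ : Equiv.Perm (Fin k)) :
    standardPoly (x ∘ σ) = (Equiv.Perm.sign σ : ℤ) • standardPoly x := by
  unfold standardPoly
  rw [Finset.smul_sum]
  refine Fintype.sum_equiv (Equiv.mulLeft σ) _ _ fun π => ?_
  have h : ((Equiv.Perm.sign σ : ℤ) * (Equiv.Perm.sign σ : ℤ)) = 1 := by
    rw [← Units.val_mul, Int.units_mul_self, Units.val_one]
  simp only [Equiv.coe_mulLeft, Equiv.Perm.sign_mul, Units.val_mul, smul_smul, ← mul_assoc, h,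
    one_mul, Function.comp_apply, Equiv.Perm.mul_apply]

/-- Expansion of the standard polynomial by the first letter. -/
lemma standardPoly_succ {k : ℕ} (x : Fin (k + 1) → A) :
    standardPoly x =
      ∑ j : Fin (k + 1), (-1 : ℤ) ^ (j : ℕ) • (x j * standardPoly (x ∘ j.succAbove)) := by
  rw [standardPoly, Finset.univ_perm_fin_succ, ← Finset.univ_product_univ]
  simp only [Finset.sum_map, Equiv.toEmbedding_apply, Finset.sum_product]
  refine Finset.sum_congr rfl fun i _ => ?_
  have key : ∑ e : Equiv.Perm (Fin k),
      (Equiv.Perm.sign (Equiv.Perm.decomposeFin.symm (i, e)) : ℤ) •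
        (List.ofFn fun j => x (Equiv.Perm.decomposeFin.symm (i, e) j)).prod =
      (if i = 0 then (1 : ℤ) else -1) •
        (x i * standardPoly fun j : Fin k => x (Equiv.swap 0 i j.succ)) := by
    rw [standardPoly, Finset.mul_sum, Finset.smul_sum]
    refine Finset.sum_congr rfl fun e _ => ?_
    rw [List.ofFn_succ, List.prod_cons]
    simp only [Equiv.Perm.decomposeFin_symm_apply_zero, Equiv.Perm.decomposeFin_symm_apply_succ,
      Equiv.Perm.decomposeFin.symm_sign, mul_smul_comm, smul_smul]
    split_ifs <;> simp
  rw [key]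
  refine Fin.cases ?_ (fun i => ?_) i
  · simp [Function.comp_def]
  · have h : (fun j : Fin k => x (Equiv.swap 0 i.succ j.succ)) =
        (x ∘ i.succ.succAbove) ∘ i.cycleRange := by
      funext j
      simp [Fin.succAbove_cycleRange]
    rw [h, standardPoly_comp_perm, if_neg (Fin.succ_ne_zero i), Fin.sign_cycleRange,
      mul_smul_comm, smul_smul, Fin.val_succ, pow_succ']
    simp

lemma standardPoly_cons {k : ℕ} (a : A) (x : Fin (k + 1) → A) :
    standardPoly (Fin.cons a x : Fin (k + 2) → A) = a * standardPoly x -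
      ∑ j : Fin (k + 1), (-1 : ℤ) ^ (j : ℕ) •
        (x j * standardPoly (Fin.cons a (x ∘ j.succAbove) : Fin (k + 1) → A)) := by
  rw [standardPoly_succ, Fin.sum_univ_succ, sub_eq_add_neg, ← Finset.sum_neg_distrib]
  congr 1
  · simp [Function.comp_def]
  · refine Finset.sum_congr rfl fun j _ => ?_
    have h : (Fin.cons a x : Fin (k + 2) → A) ∘ j.succ.succAbove =
        (Fin.cons a (x ∘ j.succAbove) : Fin (k + 1) → A) := by
      funext i
      refine Fin.cases ?_ (fun i => ?_) i <;> simp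
    rw [h, Fin.cons_succ, Fin.val_succ, pow_succ']
    simp

/-- If `a` is annihilated by left multiplication by every `x i`, it has to come first. -/
lemma standardPoly_cons_of_mul_eq_zero {k : ℕ} (a : A) (x : Fin k → A) (h : ∀ i, x i * a = 0) :
    standardPoly (Fin.cons a x : Fin (k + 1) → A) = a * standardPoly x := by
  induction k with
  | zero => simp [standardPoly_succ]
  | succ k ih =>
    rw [standardPoly_cons, sub_eq_self]
    refine Finset.sum_eq_zero fun j _ => ?_
    rw [ih (x ∘ j.succAbove) fun i => h _, ← mul_assoc, h, zero_mul, smul_zero]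

lemma standardPoly_cons_one {k : ℕ} (x : Fin k → A) :
    standardPoly (Fin.cons 1 x : Fin (k + 1) → A) = if Even k then standardPoly x else 0 := by
  induction k with
  | zero => simp [standardPoly_succ]
  | succ k ih =>
    rw [standardPoly_cons, one_mul]
    simp only [ih, Nat.even_add_one]
    by_cases hk : Even k
    · simp [hk, standardPoly_succ x]
    · simp [hk]

lemma standardPoly_single {ι : Type*} [Fintype ι] [DecidableEq ι] (l : ι) {k : ℕ}
    (x : Fin (k + 1) → A) :
    standardPoly (fun i => Matrix.single l l (x i)) = Matrix.single l l (standardPoly x) := by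
  have hprod : ∀ {k : ℕ} (y : Fin (k + 1) → A),
      (List.ofFn fun i => Matrix.single l l (y i)).prod =
        Matrix.single l l (List.ofFn y).prod := by
    intro k
    induction k with
    | zero => intro y; simp
    | succ k ih =>
      intro y
      rw [List.ofFn_succ, List.prod_cons, ih, Matrix.single_mul_single_same,
        List.ofFn_succ (f := y), List.prod_cons]
  simp only [standardPoly, hprod]
  rw [← Matrix.singleAddMonoidHom_apply, map_sum]
  refine Finset.sum_congr rfl fun π _ => ?_
  rw [map_zsmul]
  rfl

/-- Staircase construction: a nonzero value of the standard polynomial in `A` yields one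
in matrices over `A`, with two more arguments for each additional row. -/
lemma exists_standardPoly_eq_single {N d : ℕ} (x : Fin (d + 1) → A) (t : ℕ) (ht : t < N) :
    ∃ C : Fin (d + 1 + 2 * t) → Matrix (Fin N) (Fin N) A,
      (∀ j a b, b.val < N - 1 - t → C j a b = 0) ∧
      standardPoly C =
        Matrix.single ⟨N - 1 - t, by omega⟩ ⟨N - 1, by omega⟩ (standardPoly x) := by
  induction t with
  | zero =>
    refine ⟨fun i => Matrix.single ⟨N - 1, by omega⟩ ⟨N - 1, by omega⟩ (x i), ?_, ?_⟩
    · intro j a b hb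
      refine Matrix.single_apply_of_ne _ _ _ _ _ ?_
      rintro ⟨-, rfl⟩
      simp at hb
    · exact standardPoly_single _ x
  | succ t ih =>
    obtain ⟨C, hC, hs⟩ := ih (by omega)
    let p : Fin N := ⟨N - 1 - (t + 1), by omega⟩
    let q : Fin N := ⟨N - 1 - t, by omega⟩
    have hpq : p.val < q.val := by simp only [p, q]; omega
    have hmul : ∀ j (c : Fin N) (a : A), C j * Matrix.single p c a = 0 := by
      intro j c a
      ext u v
      by_cases hv : v = c
      · subst hv
        simp [hC j u p hpq]
      · simp [hv]
    refine ⟨Fin.cons (Matrix.single p p 1) (Fin.cons (Matrix.single p q 1) C :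
      Fin (d + 1 + 2 * t + 1) → _), ?_, ?_⟩
    · intro j a b hb
      have hbp : b.val < p.val := hb
      refine Fin.cases ?_ (fun j => Fin.cases ?_ (fun j => ?_) j) j
      · refine Matrix.single_apply_of_ne _ _ _ _ _ ?_
        rintro ⟨-, rfl⟩
        omega
      · refine Matrix.single_apply_of_ne _ _ _ _ _ ?_
        rintro ⟨-, rfl⟩
        omega
      · exact hC j a b (hbp.trans hpq)
    · refine (standardPoly_cons_of_mul_eq_zero _ _ fun j => ?_).trans ?_
      · refine Fin.cases ?_ (fun j => ?_) j
        · exact Matrix.single_mul_single_of_ne 1 p q p (Fin.ne_of_val_ne hpq.ne') _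
        · exact hmul _ _ _
      · rw [standardPoly_cons_of_mul_eq_zero _ _ fun j => hmul j _ _, hs]
        simp [p, q, Matrix.single_mul_single_same]

end StandardPoly

lemma standardPoly_ι {R M : Type*} [CommRing R] [AddCommGroup M] [Module R M] {d : ℕ}
    (v : Fin d → M) :
    standardPoly (fun i => ExteriorAlgebra.ι R (v i)) =
      d.factorial • ExteriorAlgebra.ιMulti R d v := by
  have h : ∀ π : Equiv.Perm (Fin d), (Equiv.Perm.sign π : ℤ) •
      (List.ofFn fun i => ExteriorAlgebra.ι R (v (π i))).prod =
        ExteriorAlgebra.ιMulti R d v := by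
    intro π
    have := (ExteriorAlgebra.ιMulti R d).map_perm v π
    rw [ExteriorAlgebra.ιMulti_apply] at this
    rw [show (List.ofFn fun i => ExteriorAlgebra.ι R (v (π i))).prod = _ from this]
    rw [Units.smul_def, smul_smul, ← Units.val_mul, Int.units_mul_self, Units.val_one, one_smul]
  rw [standardPoly, Finset.sum_congr rfl fun π _ => h π]
  simp [Fintype.card_perm]

lemma ιMulti_single_ne_zero {R : Type*} [CommRing R] [Nontrivial R] {d m : ℕ} (h : d ≤ m) :
    ExteriorAlgebra.ιMulti R d
      (fun i => (Pi.single (Fin.castLE h i) 1 : Fin m → R)) ≠ 0 := by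
  intro h0
  let f : (Fin m → R) [⋀^Fin d]→ₗ[R] R :=
    (Matrix.detRowAlternating (n := Fin d) (R := R)).compLinearMap
      (LinearMap.funLeft R R (Fin.castLE h))
  have h1 := ExteriorAlgebra.liftAlternating_apply_ιMulti (Pi.single d f)
    (fun i => (Pi.single (Fin.castLE h i) 1 : Fin m → R))
  rw [h0, map_zero, Pi.single_eq_same] at h1
  have h2 : (fun i : Fin d => LinearMap.funLeft R R (Fin.castLE h)
      (Pi.single (Fin.castLE h i) 1 : Fin m → R)) = (1 : Matrix (Fin d) (Fin d) R) := by
    ext i j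
    simp [LinearMap.funLeft_apply, Pi.single_apply, Matrix.one_apply, eq_comm]
  have h3 : Matrix.det (1 : Matrix (Fin d) (Fin d) R) = 0 := by
    rw [← h2]
    exact h1.symm
  simp at h3

/-- Over a field of characteristic zero or of prime characteristic `p > 2⌊m/2⌋`, the
ring of `n × n` matrices over the Grassmann algebra of rank `m` does not satisfy the
standard identity of degree `k = 2(n + ⌊m/2⌋) − 1`. -/
theorem grassmann_matrix_no_standard_identity
    (R : Type*) [Field R] (m n : ℕ) (hn : 1 ≤ n)
    (hchar : CharZero R ∨ ∃ p : ℕ, p.Prime ∧ CharP R p ∧ 2 * (m / 2) < p)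
    (k : ℕ) (hk : k = 2 * (n + m / 2) - 1) :
    ∃ C : Fin k → Matrix (Fin n) (Fin n) (ExteriorAlgebra R (Fin m → R)),
      ∑ π : Equiv.Perm (Fin k),
        (Equiv.Perm.sign π : ℤ) • (List.ofFn fun i => C (π i)).prod ≠ 0 := by
  have hd : 2 * (m / 2) ≤ m := Nat.mul_div_le m 2
  have hfac : ((2 * (m / 2)).factorial : R) ≠ 0 := by
    rcases hchar with h | ⟨p, hp, h, hlt⟩
    · exact Nat.cast_ne_zero.2 (Nat.factorial_ne_zero _)
    · rw [Ne, CharP.cast_eq_zero_iff R p, hp.dvd_factorial]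
      omega
  obtain rfl : k = 2 * (m / 2) + 1 + 2 * (n - 1) := by omega
  obtain ⟨C, -, hC⟩ := exists_standardPoly_eq_single (N := n)
    (Fin.cons 1 fun i => ExteriorAlgebra.ι R (Pi.single (Fin.castLE hd i) 1 : Fin m → R) :
      Fin (2 * (m / 2) + 1) → ExteriorAlgebra R (Fin m → R)) (n - 1) (by omega)
  refine ⟨C, ?_⟩
  change standardPoly C ≠ 0
  rw [hC, standardPoly_cons_one, if_pos (even_two_mul _), standardPoly_ι,
    ← Nat.cast_smul_eq_nsmul R]
  intro h
  refine smul_ne_zero hfac (ιMulti_single_ne_zero (R := R) hd) ?_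
  simpa using congrFun (congrFun h ⟨n - 1 - (n - 1), by omega⟩) ⟨n - 1, by omega⟩
end
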